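/- arXiv:2107.07910 — 2 statements merged into one kernel-verified Lean document; each statement's English description precedes it below -/
import Mathlib

section
/- Assume SSCP and SLS, and let t_l < t'_l < t_r < t'_r in T. Suppose (x̄_l, x̄_r) is the greatest element of E(t_l,t_r), (ȳ_l, ȳ_r) is the greatest element of E(t'_l,t_r), and (z̄_l, z̄_r) is the greatest element of E(t_l,t'_r) (coordinatewise order). Then π(ȳ_l, ȳ_r) ≥ π(x̄_l, x̄_r) and π(z̄_l, z̄_r) ≥ π(x̄_l, x̄_r): the equilibrium indirect expected policy associated with the greatest equilibrium is increasing in each candidate's ideal policy. -/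
/-!
The expected policy rises along the path from `xb` to a coordinatewise larger equilibrium `q`
in which the left platform moves first. Since `u` is concave, a left candidate who weakly prefers
the extreme platform `x` to the moderate platform `x'` against `y` has
`π(x, y) ≤ π(x', y)`: a concave `u` falls no faster near `x` than near `y`, so moderation is
relatively less costly to this candidate than to a risk-neutral one with ideal policy at or to
the left of `x` (`pol_le_left`). Optimality of `xb.1` against `xb.2` therefore gives
`π(xb.1, xb.2) ≤ π(q.1, xb.2)`. In the same way, optimality of `q.2` against `q.1` for the right
candidate gives `π(q.1, xb.2) ≤ π(q.1, q.2)` (`pol_le_right`).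

It remains to show that the greatest equilibrium rises with each ideal policy. Strict single
crossing makes *every* selection from a best-response correspondence monotone in the opponent's
platform (`brL_mono`, `brR_mono`), and strict log supermodularity makes best responses rise with
the ideal policy (`brL_le_of_ideal`, `brR_le_of_ideal`). Choosing for the candidate whose ideal
policy is unchanged a selection through the old equilibrium, the composed best-response map is a
monotone self-map of a compact interval lying above that equilibrium, so it has a fixed point
there (`exists_equilibrium_ge`); the greatest equilibrium dominates it.
-/

open Set

/-- The policy space `T = [0,1] ⊆ ℝ`. -/
def T : Set ℝ := Set.Icc 0 1

/-- Hypotheses on the beliefs `F` about the median voter's ideal policy: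
continuous, strictly increasing on `T`, with values in `[0,1]` (full support). -/
def Fhyp (F : ℝ → ℝ) : Prop :=
  ContinuousOn F T ∧ StrictMonoOn F T ∧ ∀ x ∈ T, 0 ≤ F x ∧ F x ≤ 1

/-- The probability that candidate `l` wins given platforms `xl, xr`. -/
noncomputable def P (F : ℝ → ℝ) (xl xr : ℝ) : ℝ :=
  if xl < xr then F ((xl + xr) / 2)
  else if xl = xr then 1 / 2
  else 1 - F ((xl + xr) / 2)

/-- Hypotheses on the payoff `u x t`: jointly continuous on `T × T`, strictly
concave in the platform, and uniquely maximized at the ideal policy. -/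
def uhyp (u : ℝ → ℝ → ℝ) : Prop :=
  ContinuousOn (fun p : ℝ × ℝ => u p.1 p.2) (T ×ˢ T) ∧
  (∀ t ∈ T, StrictConcaveOn ℝ T (fun x => u x t)) ∧
  (∀ t ∈ T, ∀ x ∈ T, x ≠ t → u x t < u t t)

/-- Expected payoff of a candidate with ideal policy `t` given platforms `xl, xr`. -/
noncomputable def U (F : ℝ → ℝ) (u : ℝ → ℝ → ℝ) (t xl xr : ℝ) : ℝ :=
  P F xl xr * u xl t + (1 - P F xl xr) * u xr t

/-- Best-response set of candidate `l` with ideal policy `t` to opponent platform `x`. -/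
def brL (F : ℝ → ℝ) (u : ℝ → ℝ → ℝ) (t x : ℝ) : Set ℝ :=
  {y ∈ T | ∀ z ∈ T, U F u t z x ≤ U F u t y x}

/-- Best-response set of candidate `r` with ideal policy `t` to opponent platform `x`. -/
def brR (F : ℝ → ℝ) (u : ℝ → ℝ → ℝ) (t x : ℝ) : Set ℝ :=
  {y ∈ T | ∀ z ∈ T, U F u t x z ≤ U F u t x y}

/-- The set of Nash equilibria given ideal policies `tl, tr`
(ordered coordinatewise via the product order on `ℝ × ℝ`). -/
def E (F : ℝ → ℝ) (u : ℝ → ℝ → ℝ) (tl tr : ℝ) : Set (ℝ × ℝ) :=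
  {p | p.1 ∈ brL F u tl p.2 ∧ p.2 ∈ brR F u tr p.1}

/-- Strict single crossing property (SSCP). -/
def SSCP (F : ℝ → ℝ) (u : ℝ → ℝ → ℝ) : Prop :=
  ∀ t x x' y y' t' : ℝ, t ∈ T → x ∈ T → x' ∈ T → y ∈ T → y' ∈ T → t' ∈ T →
    t ≤ x → x < x' → x' < y → y < y' → y' ≤ t' →
    (U F u t x' y ≥ U F u t x y → U F u t x' y' > U F u t x y') ∧
    (U F u t' x' y ≥ U F u t' x' y' → U F u t' x y > U F u t' x y')

/-- Strict log supermodularity (SLS). -/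
def SLS (u : ℝ → ℝ → ℝ) : Prop :=
  ∀ t t' x x' y : ℝ, t ∈ T → t' ∈ T → x ∈ T → x' ∈ T → y ∈ T →
    ((t < t' ∧ t' ≤ x ∧ x < x' ∧ x' < y) ∨ (y < x ∧ x < x' ∧ x' ≤ t ∧ t < t')) →
    (u x' t' - u y t') / (u x t' - u y t') > (u x' t - u y t) / (u x t - u y t)

/-- The expected policy function. -/
noncomputable def pol (F : ℝ → ℝ) (xl xr : ℝ) : ℝ :=
  P F xl xr * xl + (1 - P F xl xr) * xr

/-! ### Payoffs -/

theorem mid_mem {a b : ℝ} (ha : a ∈ T) (hb : b ∈ T) : (a + b) / 2 ∈ T := by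
  simp only [T, Set.mem_Icc] at *
  constructor <;> linarith [ha.1, ha.2, hb.1, hb.2]

theorem U_lt (F : ℝ → ℝ) (u : ℝ → ℝ → ℝ) (t : ℝ) {a b : ℝ} (h : a < b) :
    U F u t a b = u b t + F ((a + b) / 2) * (u a t - u b t) := by
  simp only [U, P, if_pos h]; ring

theorem U_lt' (F : ℝ → ℝ) (u : ℝ → ℝ → ℝ) (t : ℝ) {a b : ℝ} (h : a < b) :
    U F u t a b = u a t + (1 - F ((a + b) / 2)) * (u b t - u a t) := by
  simp only [U, P, if_pos h]; ring

theorem U_self (F : ℝ → ℝ) (u : ℝ → ℝ → ℝ) (t a : ℝ) : U F u t a a = u a t := by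
  simp only [U]; ring

theorem U_gt (F : ℝ → ℝ) (u : ℝ → ℝ → ℝ) (t : ℝ) {a b : ℝ} (h : b < a) :
    U F u t a b = u b t + (1 - F ((a + b) / 2)) * (u a t - u b t) := by
  simp only [U, P, if_neg h.not_gt, if_neg h.ne']; ring

theorem U_gt' (F : ℝ → ℝ) (u : ℝ → ℝ → ℝ) (t : ℝ) {a b : ℝ} (h : b < a) :
    U F u t a b = u a t + F ((a + b) / 2) * (u b t - u a t) := by
  simp only [U, P, if_neg h.not_gt, if_neg h.ne']; ring

theorem F_pos {F : ℝ → ℝ} (hF : Fhyp F) {a b : ℝ} (ha : a ∈ T) (hb : b ∈ T) (h : a < b) :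
    0 < F ((a + b) / 2) := by
  have h0 : (0 : ℝ) ∈ T := by simp [T]
  have := hF.2.1 h0 (mid_mem ha hb) (by linarith [ha.1])
  linarith [(hF.2.2 0 h0).1]

theorem F_lt_one {F : ℝ → ℝ} (hF : Fhyp F) {a b : ℝ} (ha : a ∈ T) (hb : b ∈ T) (h : a < b) :
    F ((a + b) / 2) < 1 := by
  have h0 : (1 : ℝ) ∈ T := by simp [T]
  have := hF.2.1 (mid_mem ha hb) h0 (by linarith [hb.2])
  linarith [(hF.2.2 1 h0).2]

theorem u_anti {u : ℝ → ℝ → ℝ} (hu : uhyp u) {t x y : ℝ} (ht : t ∈ T) (hx : x ∈ T) (hy : y ∈ T)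
    (h1 : t ≤ x) (h2 : x < y) : u y t < u x t := by
  rcases h1.eq_or_lt with rfl | h
  · exact hu.2.2 _ ht y hy h2.ne'
  · have h3 := (hu.2.1 t ht).slope_anti_adjacent ht hy h h2
    have h4 := hu.2.2 t ht x hx h.ne'
    have h5 : (u x t - u t t) / (x - t) < 0 := div_neg_of_neg_of_pos (by linarith) (by linarith)
    have h6 := (div_neg_iff.1 (h3.trans h5))
    rcases h6 with h6 | h6 <;> linarith [h6.1, h6.2]

theorem u_mono {u : ℝ → ℝ → ℝ} (hu : uhyp u) {t x y : ℝ} (ht : t ∈ T) (hx : x ∈ T) (hy : y ∈ T)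
    (h1 : x < y) (h2 : y ≤ t) : u x t < u y t := by
  rcases h2.eq_or_lt with rfl | h
  · exact hu.2.2 _ ht x hx h1.ne
  · have h3 := (hu.2.1 t ht).slope_anti_adjacent hx ht h1 h
    have h4 := hu.2.2 t ht y hy h.ne
    have h5 : 0 < (u t t - u y t) / (t - y) := div_pos (by linarith) (by linarith)
    have h6 := (div_pos_iff.1 (h5.trans h3))
    rcases h6 with h6 | h6 <;> linarith [h6.1, h6.2]

theorem chord {u : ℝ → ℝ → ℝ} (hu : uhyp u) {t x y z : ℝ} (ht : t ∈ T) (hx : x ∈ T) (hz : z ∈ T)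
    (h1 : x < y) (h2 : y < z) : (z - y) * u x t + (y - x) * u z t ≤ (z - x) * u y t := by
  have h3 := (hu.2.1 t ht).slope_anti_adjacent hx hz h1 h2
  rw [div_lt_div_iff₀ (by linarith) (by linarith)] at h3
  nlinarith

theorem u_cont {u : ℝ → ℝ → ℝ} (hu : uhyp u) {t : ℝ} (ht : t ∈ T) :
    ContinuousOn (fun x => u x t) T :=
  hu.1.comp (f := fun x => (x, t)) (by fun_prop) (fun x hx => ⟨hx, ht⟩)

/-! ### Best responses -/

/-- A left candidate whose ideal policy lies left of the opponent's platform answers between the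
two: otherwise the ideal policy itself is a strictly better platform. -/
theorem brL_mem {F : ℝ → ℝ} {u : ℝ → ℝ → ℝ} (hF : Fhyp F) (hu : uhyp u) {t b y : ℝ}
    (ht : t ∈ T) (hb : b ∈ T) (h : t < b) (hy : y ∈ brL F u t b) : t ≤ y ∧ y < b := by
  have hd := hy.2 t ht
  have hyT := hy.1
  have hp := F_pos hF ht hb h
  have hub := u_anti hu ht ht hb le_rfl h
  rw [U_lt F u t h] at hd
  have hlt : y < b := by
    by_contra! hc
    rcases hc.eq_or_lt with rfl | hc
    · rw [U_self] at hd; nlinarith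
    · rw [U_gt F u t hc] at hd
      have h1 := u_anti hu ht hb hyT h.le hc
      have h2 := (hF.2.2 _ (mid_mem hyT hb)).2
      nlinarith
  refine ⟨?_, hlt⟩
  by_contra! hc
  rw [U_lt F u t hlt] at hd
  have h1 := hF.2.1 (mid_mem hyT hb) (mid_mem ht hb) (by linarith)
  have h2 := u_mono hu ht hyT ht hc le_rfl
  have h3 := (hF.2.2 _ (mid_mem hyT hb)).1
  nlinarith

/-- Mirror image of `brL_mem` for the right candidate. -/
theorem brR_mem {F : ℝ → ℝ} {u : ℝ → ℝ → ℝ} (hF : Fhyp F) (hu : uhyp u) {t a y : ℝ}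
    (ht : t ∈ T) (ha : a ∈ T) (h : a < t) (hy : y ∈ brR F u t a) : a < y ∧ y ≤ t := by
  have hd := hy.2 t ht
  have hyT := hy.1
  have hp := F_lt_one hF ha ht h
  have hub := u_mono hu ht ha ht h le_rfl
  rw [U_lt' F u t h] at hd
  have hlt : a < y := by
    by_contra! hc
    rcases hc.eq_or_lt with rfl | hc
    · rw [U_self] at hd; nlinarith
    · rw [U_gt' F u t hc] at hd
      have h1 := u_mono hu ht hyT ha hc h.le
      have h2 := (hF.2.2 _ (mid_mem ha hyT)).1
      nlinarith
  refine ⟨hlt, ?_⟩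
  by_contra! hc
  rw [U_lt' F u t hlt] at hd
  have h1 := hF.2.1 (mid_mem ha ht) (mid_mem ha hyT) (by linarith)
  have h2 := u_anti hu ht ht hyT le_rfl hc
  have h3 := (hF.2.2 _ (mid_mem ha hyT)).2
  nlinarith

theorem brL_nonempty {F : ℝ → ℝ} {u : ℝ → ℝ → ℝ} (hF : Fhyp F) (hu : uhyp u) {t b : ℝ}
    (ht : t ∈ T) (hb : b ∈ T) (h : t < b) : ∃ y, y ∈ brL F u t b := by
  have hsub : Icc t b ⊆ T := fun x hx => ⟨ht.1.trans hx.1, hx.2.trans hb.2⟩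
  have hc : ContinuousOn (fun y => F ((y + b) / 2) * (u y t - u b t)) (Icc t b) := by
    refine ContinuousOn.mul ?_ (((u_cont hu ht).mono hsub).sub continuousOn_const)
    exact hF.1.comp (f := fun y => (y + b) / 2) (by fun_prop)
      (fun y hy => mid_mem (hsub hy) hb)
  obtain ⟨y, hy, hmax⟩ := isCompact_Icc.exists_isMaxOn ⟨t, le_rfl, h.le⟩ hc
  have hm : ∀ z, t ≤ z → z ≤ b →
      F ((z + b) / 2) * (u z t - u b t) ≤ F ((y + b) / 2) * (u y t - u b t) :=
    fun z h1 h2 => hmax ⟨h1, h2⟩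
  -- The formula for `a < b` also gives the right value at `a = b`.
  have hU : ∀ z, z ≤ b → U F u t z b = u b t + F ((z + b) / 2) * (u z t - u b t) := by
    intro z hz
    rcases hz.eq_or_lt with rfl | hz
    · rw [U_self]; ring
    · exact U_lt F u t hz
  refine ⟨y, hsub hy, fun z hz => ?_⟩
  rw [hU y hy.2]
  rcases le_or_gt z b with hzb | hzb
  · rw [hU z hzb]
    rcases le_or_gt t z with htz | htz
    · linarith [hm z htz hzb]
    · have h1 := hm t le_rfl h.le
      have h2 := hF.2.1 (mid_mem hz hb) (mid_mem ht hb) (by linarith)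
      have h3 := u_mono hu ht hz ht htz le_rfl
      have h4 := (hF.2.2 _ (mid_mem hz hb)).1
      have h5 := u_anti hu ht ht hb le_rfl h
      nlinarith
  · rw [U_gt F u t hzb]
    have h1 := hm b h.le le_rfl
    have h2 := u_anti hu ht hb hz h.le hzb
    have h3 := (hF.2.2 _ (mid_mem hz hb)).2
    nlinarith

theorem brR_nonempty {F : ℝ → ℝ} {u : ℝ → ℝ → ℝ} (hF : Fhyp F) (hu : uhyp u) {t a : ℝ}
    (ht : t ∈ T) (ha : a ∈ T) (h : a < t) : ∃ y, y ∈ brR F u t a := by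
  have hsub : Icc a t ⊆ T := fun x hx => ⟨ha.1.trans hx.1, hx.2.trans ht.2⟩
  have hc : ContinuousOn (fun y => (1 - F ((a + y) / 2)) * (u y t - u a t)) (Icc a t) := by
    refine ContinuousOn.mul (continuousOn_const.sub ?_)
      (((u_cont hu ht).mono hsub).sub continuousOn_const)
    exact hF.1.comp (f := fun y => (a + y) / 2) (by fun_prop)
      (fun y hy => mid_mem ha (hsub hy))
  obtain ⟨y, hy, hmax⟩ := isCompact_Icc.exists_isMaxOn ⟨t, h.le, le_rfl⟩ hc
  have hm : ∀ z, a ≤ z → z ≤ t →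
      (1 - F ((a + z) / 2)) * (u z t - u a t) ≤ (1 - F ((a + y) / 2)) * (u y t - u a t) :=
    fun z h1 h2 => hmax ⟨h1, h2⟩
  have hU : ∀ z, a ≤ z → U F u t a z = u a t + (1 - F ((a + z) / 2)) * (u z t - u a t) := by
    intro z hz
    rcases hz.eq_or_lt with rfl | hz
    · rw [U_self]; ring
    · exact U_lt' F u t hz
  refine ⟨y, hsub hy, fun z hz => ?_⟩
  rw [hU y hy.1]
  rcases le_or_gt a z with hzb | hzb
  · rw [hU z hzb]
    rcases le_or_gt z t with htz | htz
    · linarith [hm z hzb htz]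
    · have h1 := hm t h.le le_rfl
      have h2 := hF.2.1 (mid_mem ha ht) (mid_mem ha hz) (by linarith)
      have h3 := u_anti hu ht ht hz le_rfl htz
      have h4 := (hF.2.2 _ (mid_mem ha hz)).2
      have h5 := u_mono hu ht ha ht h le_rfl
      nlinarith
  · rw [U_gt' F u t hzb]
    have h1 := hm a le_rfl h.le
    have h2 := u_mono hu ht hz ha hzb h.le
    have h3 := (hF.2.2 _ (mid_mem ha hz)).1
    nlinarith

/-- Strict single crossing: any two best responses of the left candidate are ordered like the
opponent platforms they answer. -/
theorem brL_mono {F : ℝ → ℝ} {u : ℝ → ℝ → ℝ} (hF : Fhyp F) (hu : uhyp u) (hS : SSCP F u)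
    {t b b' y y' : ℝ} (ht : t ∈ T) (hb : b ∈ T) (hb' : b' ∈ T) (h : t < b) (hbb : b < b')
    (hy : y ∈ brL F u t b) (hy' : y' ∈ brL F u t b') : y ≤ y' := by
  by_contra! hc
  have h1 := brL_mem hF hu ht hb h hy
  have h2 := brL_mem hF hu ht hb' (h.trans hbb) hy'
  have := (hS t y' y b b' 1 ht hy'.1 hy.1 hb hb' (by simp [T]) h2.1 hc h1.2 hbb hb'.2).1
    (hy.2 y' hy'.1)
  exact absurd (hy'.2 y hy.1) (not_le.2 this)

theorem brR_mono {F : ℝ → ℝ} {u : ℝ → ℝ → ℝ} (hF : Fhyp F) (hu : uhyp u) (hS : SSCP F u)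
    {t a a' y y' : ℝ} (ht : t ∈ T) (ha : a ∈ T) (ha' : a' ∈ T) (h : a' < t) (haa : a < a')
    (hy : y ∈ brR F u t a) (hy' : y' ∈ brR F u t a') : y ≤ y' := by
  by_contra! hc
  have h1 := brR_mem hF hu ht ha (haa.trans h) hy
  have h2 := brR_mem hF hu ht ha' h hy'
  have := (hS 0 a a' y' y t (by simp [T]) ha ha' hy'.1 hy.1 ht ha.1 haa h2.1 hc h1.2).2
    (hy'.2 y hy.1)
  exact absurd (hy.2 y' hy'.1) (not_le.2 this)

/-- Strict log supermodularity: best responses of the left candidate rise with the ideal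
policy. -/
theorem brL_le_of_ideal {F : ℝ → ℝ} {u : ℝ → ℝ → ℝ} (hF : Fhyp F) (hu : uhyp u) (hS : SLS u)
    {t t' b y y' : ℝ} (ht : t ∈ T) (ht' : t' ∈ T) (hb : b ∈ T) (htt : t < t') (h : t' < b)
    (hy : y ∈ brL F u t b) (hy' : y' ∈ brL F u t' b) : y ≤ y' := by
  by_contra! hc
  have h1 := brL_mem hF hu ht hb (htt.trans h) hy
  have h2 := brL_mem hF hu ht' hb h hy'
  have hs := hS t t' y' y b ht ht' hy'.1 hy.1 hb (Or.inl ⟨htt, h2.1, hc, h1.2⟩)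
  have a1 := hy.2 y' hy'.1
  have a2 := hy'.2 y hy.1
  rw [U_lt F u _ h1.2, U_lt F u _ h2.2] at a1 a2
  have p1 := u_anti hu ht hy'.1 hb (by linarith) h2.2
  have p2 := u_anti hu ht' hy'.1 hb h2.1 h2.2
  have q := F_pos hF hy.1 hb h1.2
  rw [gt_iff_lt, div_lt_div_iff₀ (by linarith) (by linarith)] at hs
  have s1 := mul_lt_mul_of_pos_left hs q
  have s2 := mul_le_mul_of_nonneg_right (by linarith :
    F ((y' + b) / 2) * (u y' t - u b t) ≤ F ((y + b) / 2) * (u y t - u b t))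
    (sub_nonneg.2 p2.le)
  have s3 := mul_le_mul_of_nonneg_right (by linarith :
    F ((y + b) / 2) * (u y t' - u b t') ≤ F ((y' + b) / 2) * (u y' t' - u b t'))
    (sub_nonneg.2 p1.le)
  linarith

theorem brR_le_of_ideal {F : ℝ → ℝ} {u : ℝ → ℝ → ℝ} (hF : Fhyp F) (hu : uhyp u) (hS : SLS u)
    {t t' a y y' : ℝ} (ht : t ∈ T) (ht' : t' ∈ T) (ha : a ∈ T) (htt : t < t') (h : a < t)
    (hy : y ∈ brR F u t a) (hy' : y' ∈ brR F u t' a) : y ≤ y' := by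
  by_contra! hc
  have h1 := brR_mem hF hu ht ha h hy
  have h2 := brR_mem hF hu ht' ha (h.trans htt) hy'
  have hs := hS t t' y' y a ht ht' hy'.1 hy.1 ha (Or.inr ⟨h2.1, hc, h1.2, htt⟩)
  have a1 := hy.2 y' hy'.1
  have a2 := hy'.2 y hy.1
  rw [U_lt' F u _ h1.1, U_lt' F u _ h2.1] at a1 a2
  have p1 := u_mono hu ht ha hy'.1 h2.1 (by linarith)
  have p2 := u_mono hu ht' ha hy'.1 h2.1 h2.2
  have q := F_lt_one hF ha hy.1 h1.1
  rw [gt_iff_lt, div_lt_div_iff₀ (by linarith) (by linarith)] at hs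
  have s1 := mul_lt_mul_of_pos_left hs (sub_pos.2 q)
  have s2 := mul_le_mul_of_nonneg_right (by linarith :
    (1 - F ((a + y') / 2)) * (u y' t - u a t) ≤ (1 - F ((a + y) / 2)) * (u y t - u a t))
    (sub_nonneg.2 p2.le)
  have s3 := mul_le_mul_of_nonneg_right (by linarith :
    (1 - F ((a + y) / 2)) * (u y t' - u a t') ≤ (1 - F ((a + y') / 2)) * (u y' t' - u a t'))
    (sub_nonneg.2 p1.le)
  linarith

/-! ### Equilibria -/

/-- In equilibrium the platforms are distinct, correctly ordered and lie between the ideal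
policies. -/
theorem E_mem {F : ℝ → ℝ} {u : ℝ → ℝ → ℝ} (hF : Fhyp F) (hu : uhyp u) {tl tr : ℝ}
    (htl : tl ∈ T) (htr : tr ∈ T) (h : tl < tr) {p : ℝ × ℝ} (hp : p ∈ E F u tl tr) :
    tl ≤ p.1 ∧ p.1 < p.2 ∧ p.2 ≤ tr := by
  obtain ⟨a, b⟩ := p
  obtain ⟨hl, hr⟩ := hp
  simp only at hl hr ⊢
  have haT := hl.1
  have hbT := hr.1
  rcases lt_or_ge tl b with hb | hb
  · have h1 := brL_mem hF hu htl hbT hb hl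
    refine ⟨h1.1, h1.2, ?_⟩
    rcases lt_or_ge a tr with ha | ha
    · exact (brR_mem hF hu htr haT ha hr).2
    · -- both platforms lie right of `tr`, so the right candidate prefers to copy `a`
      have h2 := hr.2 a haT
      rw [U_self, U_lt' F u _ h1.2] at h2
      have h3 := u_anti hu htr haT hbT ha h1.2
      have h4 := F_lt_one hF haT hbT h1.2
      nlinarith
  · exfalso
    rcases lt_or_ge a tr with ha | ha
    · have h1 := brR_mem hF hu htr haT ha hr
      have h2 := hl.2 b hbT
      rw [U_self, U_lt F u _ h1.1] at h2
      have h3 := u_mono hu htl haT hbT h1.1 hb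
      have h4 := F_pos hF haT hbT h1.1
      nlinarith
    · -- crossed platforms `b ≤ tl < tr ≤ a`: the left candidate moves to `tl`
      have hba : b < a := by linarith
      have h2 := hl.2 tl htl
      rw [U_gt F u _ hba] at h2
      have h3 := u_anti hu htl htl haT le_rfl (h.trans_le ha)
      have h4 := F_lt_one hF hbT haT hba
      rw [add_comm b a] at h4
      rcases hb.eq_or_lt with rfl | hb
      · rw [U_self] at h2; nlinarith
      · rw [U_gt F u _ hb] at h2
        have h5 := u_mono hu htl hbT htl hb le_rfl
        have h6 := hF.2.1 (mid_mem htl hbT) (mid_mem haT hbT) (by linarith)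
        nlinarith

/-- Tarski's fixed point theorem on a compact real interval. -/
theorem exists_fixed_point {a c : ℝ} (hac : a ≤ c) (G : ℝ → ℝ) (hG : MonotoneOn G (Icc a c))
    (hm : MapsTo G (Icc a c) (Icc a c)) : ∃ x ∈ Icc a c, G x = x := by
  set S : Set ℝ := {x ∈ Icc a c | x ≤ G x} with hS
  have haS : a ∈ S := ⟨⟨le_rfl, hac⟩, (hm ⟨le_rfl, hac⟩).1⟩
  have hbd : BddAbove S := ⟨c, fun x hx => hx.1.2⟩
  have hsm : sSup S ∈ Icc a c := ⟨le_csSup hbd haS, csSup_le ⟨a, haS⟩ fun x hx => hx.1.2⟩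
  have h1 : sSup S ≤ G (sSup S) := csSup_le ⟨a, haS⟩ fun x hx =>
    hx.2.trans (hG hx.1 hsm (le_csSup hbd hx))
  have h2 : G (sSup S) ∈ S := ⟨hm hsm, hG hsm (hm hsm) h1⟩
  exact ⟨_, hsm, le_antisymm (le_csSup hbd h2) h1⟩

/-- If best-response selections `L`, `R` map platforms above `(a, b)` to platforms above `(a, b)`,
there is an equilibrium above `(a, b)`. The composite `L ∘ R` is a monotone self-map of `[max a s, L t]`. -/
theorem exists_equilibrium_ge {F : ℝ → ℝ} {u : ℝ → ℝ → ℝ} (hF : Fhyp F) (hu : uhyp u)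
    (hS : SSCP F u) {s t a b : ℝ} (hs : s ∈ T) (ht : t ∈ T) (hst : s < t) (hbt : b ≤ t)
    {L R : ℝ → ℝ} (hL : ∀ y ∈ T, s < y → L y ∈ brL F u s y)
    (hR : ∀ x ∈ T, x < t → R x ∈ brR F u t x)
    (hLa : ∀ y ∈ T, s < y → b ≤ y → a ≤ L y)
    (hRb : ∀ x ∈ T, x < t → a ≤ x → b ≤ R x) :
    ∃ p ∈ E F u s t, a ≤ p.1 ∧ b ≤ p.2 := by
  have hLm : ∀ y ∈ T, ∀ y' ∈ T, s < y → y ≤ y' → L y ≤ L y' := by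
    intro y hy y' hy' h1 h2
    rcases h2.eq_or_lt with rfl | h2
    · exact le_rfl
    · exact brL_mono hF hu hS hs hy hy' h1 h2 (hL y hy h1) (hL y' hy' (h1.trans h2))
  have hRm : ∀ y ∈ T, ∀ y' ∈ T, y' < t → y ≤ y' → R y ≤ R y' := by
    intro y hy y' hy' h1 h2
    rcases h2.eq_or_lt with rfl | h2
    · exact le_rfl
    · exact brR_mono hF hu hS ht hy hy' h1 h2 (hR y hy (h2.trans h1)) (hR y' hy' h1)
  have hLt := brL_mem hF hu hs ht hst (hL t ht hst)
  have key : ∀ x ∈ Icc (max a s) (L t), x ∈ T ∧ s ≤ x ∧ x < t ∧ a ≤ x := by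
    intro x hx
    have h1 := (le_max_left _ _).trans hx.1
    have h2 := (le_max_right _ _).trans hx.1
    have h3 := hx.2.trans_lt hLt.2
    exact ⟨⟨hs.1.trans h2, h3.le.trans ht.2⟩, h2, h3, h1⟩
  have key2 : ∀ x ∈ Icc (max a s) (L t), R x ∈ T ∧ s < R x ∧ R x ≤ t ∧ b ≤ R x := by
    intro x hx
    obtain ⟨k1, k2, k3, k4⟩ := key x hx
    have h1 := brR_mem hF hu ht k1 k3 (hR x k1 k3)
    exact ⟨(hR x k1 k3).1, k2.trans_lt h1.1, h1.2, hRb x k1 k3 k4⟩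
  obtain ⟨x, hx, hfix⟩ := exists_fixed_point (a := max a s) (c := L t)
    (max_le (hLa t ht hst hbt) hLt.1) (fun x => L (R x))
    (by
      intro x hx x' hx' hxx
      obtain ⟨k1, k2, k3, k4⟩ := key x hx
      obtain ⟨k1', k2', k3', k4'⟩ := key x' hx'
      exact hLm _ (key2 x hx).1 _ (key2 x' hx').1 (key2 x hx).2.1 (hRm x k1 x' k1' k3' hxx))
    (by
      intro x hx
      obtain ⟨m1, m2, m3, m4⟩ := key2 x hx
      exact ⟨max_le (hLa _ m1 m2 m4) (brL_mem hF hu hs m1 m2 (hL _ m1 m2)).1,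
        hLm _ m1 t ht m2 m3⟩)
  obtain ⟨k1, k2, k3, k4⟩ := key x hx
  obtain ⟨m1, m2, m3, m4⟩ := key2 x hx
  have hfix' : L (R x) = x := hfix
  refine ⟨(x, R x), ⟨?_, hR x k1 k3⟩, k4, m4⟩
  have := hL _ m1 m2
  rwa [hfix'] at this

/-- A best-response selection for the left candidate through a prescribed point `(b, a)`. -/
theorem exists_brL_selection {F : ℝ → ℝ} {u : ℝ → ℝ → ℝ} (hF : Fhyp F) (hu : uhyp u)
    {t a b : ℝ} (ht : t ∈ T) (hab : a ∈ brL F u t b) :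
    ∃ L : ℝ → ℝ, L b = a ∧ ∀ y ∈ T, t < y → L y ∈ brL F u t y := by
  classical
  have h : ∀ y, ∃ x, y ∈ T → t < y → x ∈ brL F u t y := by
    intro y
    by_cases hy : y ∈ T ∧ t < y
    · exact (brL_nonempty hF hu ht hy.1 hy.2).imp fun x hx _ _ => hx
    · exact ⟨0, fun h1 h2 => absurd ⟨h1, h2⟩ hy⟩
  choose L hL using h
  refine ⟨Function.update L b a, by simp, fun y hy hty => ?_⟩
  by_cases hyb : y = b
  · subst hyb; simpa using hab
  · simpa [Function.update_of_ne hyb] using hL y hy hty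

theorem exists_brR_selection {F : ℝ → ℝ} {u : ℝ → ℝ → ℝ} (hF : Fhyp F) (hu : uhyp u)
    {t a b : ℝ} (ht : t ∈ T) (hab : b ∈ brR F u t a) :
    ∃ R : ℝ → ℝ, R a = b ∧ ∀ x ∈ T, x < t → R x ∈ brR F u t x := by
  classical
  have h : ∀ x, ∃ y, x ∈ T → x < t → y ∈ brR F u t x := by
    intro x
    by_cases hx : x ∈ T ∧ x < t
    · exact (brR_nonempty hF hu ht hx.1 hx.2).imp fun y hy _ _ => hy
    · exact ⟨0, fun h1 h2 => absurd ⟨h1, h2⟩ hx⟩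
  choose R hR using h
  refine ⟨Function.update R a b, by simp, fun x hx hxt => ?_⟩
  by_cases hxa : x = a
  · subst hxa; simpa using hab
  · simpa [Function.update_of_ne hxa] using hR x hx hxt

/-- Raising the left ideal policy yields an equilibrium above any given one. -/
theorem exists_ge_of_left {F : ℝ → ℝ} {u : ℝ → ℝ → ℝ} (hF : Fhyp F) (hu : uhyp u)
    (hS : SSCP F u) (hSL : SLS u) {tl tl' tr : ℝ} (htl : tl ∈ T) (htl' : tl' ∈ T) (htr : tr ∈ T)
    (h1 : tl < tl') (h2 : tl' < tr) {x : ℝ × ℝ} (hx : x ∈ E F u tl tr) :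
    ∃ p ∈ E F u tl' tr, x.1 ≤ p.1 ∧ x.2 ≤ p.2 := by
  obtain ⟨e1, e2, e3⟩ := E_mem hF hu htl htr (h1.trans h2) hx
  have hx1 := hx.1.1
  have hx2 := hx.2.1
  obtain ⟨R, hRx, hR⟩ := exists_brR_selection hF hu htr hx.2
  obtain ⟨y₀, hy₀⟩ := brL_nonempty hF hu htl' htr h2
  obtain ⟨L, -, hL⟩ := exists_brL_selection hF hu htl' hy₀
  refine exists_equilibrium_ge hF hu hS htl' htr h2 e3 hL hR ?_ ?_
  · intro y hy hty hxy
    rcases le_or_gt x.2 tl' with hc | hc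
    · linarith [(brL_mem hF hu htl' hy hty (hL y hy hty)).1]
    · have k1 := brL_le_of_ideal hF hu hSL htl htl' hx2 h1 hc hx.1 (hL _ hx2 hc)
      rcases hxy.eq_or_lt with rfl | hxy
      · exact k1
      · exact k1.trans (brL_mono hF hu hS htl' hx2 hy hc hxy (hL _ hx2 hc) (hL y hy hty))
  · intro y hy hyt hxy
    rcases hxy.eq_or_lt with rfl | hxy
    · exact hRx.ge
    · exact brR_mono hF hu hS htr hx1 hy hyt hxy hx.2 (hR y hy hyt)

/-- Raising the right ideal policy yields an equilibrium above any given one. -/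
theorem exists_ge_of_right {F : ℝ → ℝ} {u : ℝ → ℝ → ℝ} (hF : Fhyp F) (hu : uhyp u)
    (hS : SSCP F u) (hSL : SLS u) {tl tr tr' : ℝ} (htl : tl ∈ T) (htr : tr ∈ T) (htr' : tr' ∈ T)
    (h1 : tl < tr) (h2 : tr < tr') {x : ℝ × ℝ} (hx : x ∈ E F u tl tr) :
    ∃ p ∈ E F u tl tr', x.1 ≤ p.1 ∧ x.2 ≤ p.2 := by
  obtain ⟨e1, e2, e3⟩ := E_mem hF hu htl htr h1 hx
  have hx1 := hx.1.1
  have hx2 := hx.2.1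
  have hc : x.1 < tr := by linarith
  obtain ⟨L, hLx, hL⟩ := exists_brL_selection hF hu htl hx.1
  obtain ⟨y₀, hy₀⟩ := brR_nonempty hF hu htr' htl (h1.trans h2)
  obtain ⟨R, -, hR⟩ := exists_brR_selection hF hu htr' hy₀
  refine exists_equilibrium_ge hF hu hS htl htr' (h1.trans h2) (e3.trans h2.le) hL hR ?_ ?_
  · intro y hy hty hxy
    rcases hxy.eq_or_lt with rfl | hxy
    · exact hLx.ge
    · exact brL_mono hF hu hS htl hx2 hy (by linarith) hxy hx.1 (hL y hy hty)
  · intro y hy hyt hxy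
    have hRx := hR _ hx1 (hc.trans h2)
    have k1 := brR_le_of_ideal hF hu hSL htr htr' hx1 h2 hc hx.2 hRx
    rcases hxy.eq_or_lt with rfl | hxy
    · exact k1
    · exact k1.trans (brR_mono hF hu hS htr' hx1 hy hyt hxy hRx (hR y hy hyt))

/-! ### Expected policy -/

theorem pol_lt (F : ℝ → ℝ) {a b : ℝ} (h : a < b) :
    pol F a b = b - F ((a + b) / 2) * (b - a) := by
  simp only [pol, P, if_pos h]; ring

/-- If the left candidate weakly prefers the more extreme platform `x` to `x'`, moving to `x'`
raises the expected policy, because `u` is concave. -/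
theorem pol_le_left {F : ℝ → ℝ} {u : ℝ → ℝ → ℝ} (hF : Fhyp F) (hu : uhyp u) {t x x' y : ℝ}
    (ht : t ∈ T) (hx : x ∈ T) (hx' : x' ∈ T) (hy : y ∈ T) (h1 : t ≤ x) (h2 : x < x') (h3 : x' < y)
    (hU : U F u t x' y ≤ U F u t x y) : pol F x y ≤ pol F x' y := by
  rw [U_lt F u _ h3, U_lt F u _ (h2.trans h3)] at hU
  rw [pol_lt F h3, pol_lt F (h2.trans h3)]
  have hc := chord hu ht hx hy h2 h3
  have hp := u_anti hu ht hx' hy (h1.trans h2.le) h3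
  have hq := (hF.2.2 _ (mid_mem hx hy)).1
  have key : F ((x' + y) / 2) * (y - x') * (u x' t - u y t) ≤
      F ((x + y) / 2) * (y - x) * (u x' t - u y t) := by
    have s1 := mul_le_mul_of_nonneg_left (by linarith :
      (y - x') * (u x t - u y t) ≤ (y - x) * (u x' t - u y t)) hq
    have s2 := mul_le_mul_of_nonneg_left (by linarith :
      F ((x' + y) / 2) * (u x' t - u y t) ≤ F ((x + y) / 2) * (u x t - u y t))
      (sub_nonneg.2 h3.le)
    linarith
  linarith [le_of_mul_le_mul_right key (sub_pos.2 hp)]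

/-- If the right candidate weakly prefers the more extreme platform `y'` to `y`, moving to `y'`
raises the expected policy, because `u` is concave. -/
theorem pol_le_right {F : ℝ → ℝ} {u : ℝ → ℝ → ℝ} (hF : Fhyp F) (hu : uhyp u) {t x y y' : ℝ}
    (ht : t ∈ T) (hx : x ∈ T) (hy : y ∈ T) (hy' : y' ∈ T) (h1 : x < y) (h2 : y < y') (h3 : y' ≤ t)
    (hU : U F u t x y ≤ U F u t x y') : pol F x y ≤ pol F x y' := by
  rw [U_lt' F u _ h1, U_lt' F u _ (h1.trans h2)] at hU
  rw [pol_lt F h1, pol_lt F (h1.trans h2)]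
  have hc := chord hu ht hx hy' h1 h2
  have hp := u_mono hu ht hx hy h1 (h2.le.trans h3)
  have hq := (hF.2.2 _ (mid_mem hx hy')).2
  have key : (1 - F ((x + y) / 2)) * (y - x) * (u y t - u x t) ≤
      (1 - F ((x + y') / 2)) * (y' - x) * (u y t - u x t) := by
    have s1 := mul_le_mul_of_nonneg_left (by linarith :
      (y - x) * (u y' t - u x t) ≤ (y' - x) * (u y t - u x t)) (sub_nonneg.2 hq)
    have s2 := mul_le_mul_of_nonneg_left (by linarith :
      (1 - F ((x + y) / 2)) * (u y t - u x t) ≤ (1 - F ((x + y') / 2)) * (u y' t - u x t))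
      (sub_nonneg.2 h1.le)
    linarith
  linarith [le_of_mul_le_mul_right key (sub_pos.2 hp)]

/-- The expected policy is monotone across coordinatewise ordered equilibria, even for different
pairs of ideal policies. -/
theorem pol_le_of_E {F : ℝ → ℝ} {u : ℝ → ℝ → ℝ} (hF : Fhyp F) (hu : uhyp u) {tl tr sl sr : ℝ}
    (htl : tl ∈ T) (htr : tr ∈ T) (hsl : sl ∈ T) (hsr : sr ∈ T) (ht : tl < tr) (hs : sl < sr)
    {x y : ℝ × ℝ} (hx : x ∈ E F u tl tr) (hy : y ∈ E F u sl sr) (h1 : x.1 ≤ y.1)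
    (h2 : x.2 ≤ y.2) : pol F x.1 x.2 ≤ pol F y.1 y.2 := by
  obtain ⟨e1, e2, -⟩ := E_mem hF hu htl htr ht hx
  obtain ⟨-, d2, d3⟩ := E_mem hF hu hsl hsr hs hy
  rcases lt_or_ge y.1 x.2 with hc | hc
  · have k1 : pol F x.1 x.2 ≤ pol F y.1 x.2 := by
      rcases h1.eq_or_lt with h1 | h1
      · rw [h1]
      · exact pol_le_left hF hu htl hx.1.1 hy.1.1 hx.2.1 e1 h1 hc (hx.1.2 _ hy.1.1)
    refine k1.trans ?_
    rcases h2.eq_or_lt with h2 | h2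
    · rw [h2]
    · exact pol_le_right hF hu hsr hy.1.1 hx.2.1 hy.2.1 hc h2 d3 (hy.2.2 _ hx.2.1)
  · -- the two platform intervals do not overlap
    rw [pol_lt F e2, pol_lt F d2]
    have q1 := (hF.2.2 _ (mid_mem hx.1.1 hx.2.1)).1
    have q2 := (hF.2.2 _ (mid_mem hy.1.1 hy.2.1)).2
    nlinarith

/-- Under SSCP and SLS, the equilibrium indirect expected policy associated
with the greatest equilibrium is increasing in each candidate's ideal policy. -/
theorem indirect_expected_policy_monotone_greatest (F : ℝ → ℝ) (u : ℝ → ℝ → ℝ)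
    (hF : Fhyp F) (hu : uhyp u) (hSSCP : SSCP F u) (hSLS : SLS u)
    (tl tl' tr tr' : ℝ)
    (htl : tl ∈ T) (htl' : tl' ∈ T) (htr : tr ∈ T) (htr' : tr' ∈ T)
    (h1 : tl < tl') (h2 : tl' < tr) (h3 : tr < tr')
    (xb yb zb : ℝ × ℝ)
    (hx : IsGreatest (E F u tl tr) xb)
    (hy : IsGreatest (E F u tl' tr) yb)
    (hz : IsGreatest (E F u tl tr') zb) :
    pol F yb.1 yb.2 ≥ pol F xb.1 xb.2 ∧ pol F zb.1 zb.2 ≥ pol F xb.1 xb.2 := by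
  obtain ⟨p, hp, p1, p2⟩ := exists_ge_of_left hF hu hSSCP hSLS htl htl' htr h1 h2 hx.1
  obtain ⟨q, hq, q1, q2⟩ :=
    exists_ge_of_right hF hu hSSCP hSLS htl htr htr' (h1.trans h2) h3 hx.1
  have hpy := hy.2 hp
  have hqz := hz.2 hq
  exact ⟨pol_le_of_E hF hu htl htr htl' htr (h1.trans h2) h2 hx.1 hy.1
      (p1.trans hpy.1) (p2.trans hpy.2),
    pol_le_of_E hF hu htl htr htl htr' (h1.trans h2) ((h1.trans h2).trans h3) hx.1 hz.1
      (q1.trans hqz.1) (q2.trans hqz.2)⟩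
end

section
/- For every t_r ∈ ℝ with 1/2 < t_r ≤ 3/4 and all t_l, t'_l ∈ ℝ with 0 ≤ t_l < t'_l ≤ t_r/3, one has π*(t'_l, t_r) < π*(t_l, t_r). In particular, in the model without commitment the equilibrium indirect expected policy function need not be increasing in the ideal policy of the left candidate. -/
/-- The equilibrium indirect expected policy function in the model without
commitment, for `t_l ≤ 1 - t_r`, where candidates believe the median voter's
ideal policy follows the triangular distribution on `[0,1]` with mode `1/2`
(so `F m = 2 m ^ 2` for `m ≤ 1/2`) and each candidate's platform equals
their ideal policy. -/
noncomputable def piStar (tl tr : ℝ) : ℝ :=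
  2 * ((tl + tr) / 2) ^ 2 * tl + (1 - 2 * ((tl + tr) / 2) ^ 2) * tr

/-- In the model without commitment, the equilibrium indirect expected policy
function is strictly decreasing in `t_l` on `[0, t_r / 3]` whenever
`1/2 < t_r ≤ 3/4`: it need not be increasing in the left candidate's ideal
policy. -/
theorem piStar_decreasing_without_commitment :
    ∀ tr : ℝ, 1 / 2 < tr → tr ≤ 3 / 4 →
    ∀ tl tl' : ℝ, 0 ≤ tl → tl < tl' → tl' ≤ tr / 3 →
    piStar tl' tr < piStar tl tr := by
  intro tr h1 _ a b ha hab hb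
  have ht : 0 < tr := by linarith
  -- The difference quotient in `t_l` of `2 * (piStar - tr)`: each of its positive terms is
  -- bounded by its value at `a = b = tr / 3`, where the quotient vanishes.
  have hq : b ^ 2 + a * b + a ^ 2 + tr * (a + b) - tr ^ 2 < 0 := by
    have hbb : b ^ 2 ≤ (tr / 3) ^ 2 := by gcongr; linarith
    have hab' : a * b ≤ (tr / 3) * (tr / 3) := by gcongr <;> linarith
    have haa : a ^ 2 ≤ (tr / 3) ^ 2 := by gcongr; linarith
    have hs : tr * (a + b) < tr * (2 * tr / 3) := by gcongr; linarith
    linarith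
  have hneg := mul_neg_of_pos_of_neg (sub_pos.mpr hab) hq
  unfold piStar
  linarith
end
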